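/- arXiv:1011.4090 — 2 statements merged into one kernel-verified Lean document; each statement's English description precedes it below -/
import Mathlib

section
/- Let P(t₁,…,t_n) be a symmetric polynomial in n variables (over a field of characteristic 0) such that P(x,…,x,t₁,…,t_{n−N−1}) = 0 whenever the first N+1 arguments coincide (for all x and all t's), where N+1 ≤ n. Then for every x, the polynomial (t₁,…,t_{n−N}) ↦ P(x,…,x,t₁,…,t_{n−N}) (with N copies of x) is divisible by ∏_{j=1}^{n−N} (t_j − x)². -/
open MvPolynomial in
lemma cdz_chain {F σ A : Type*} [Field F] [Fintype σ] [DecidableEq σ] [CommRing A] [Algebra F A]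
    (D : Derivation F A A) (f : σ → A) (P : MvPolynomial σ F) :
    D (aeval f P) = ∑ i, aeval f (pderiv i P) * D (f i) := by
  induction P using MvPolynomial.induction_on with
  | C a => simp [MvPolynomial.algHom_C]
  | add p q hp hq => simp [hp, hq, add_mul, Finset.sum_add_distrib]
  | mul_X p k hp =>
    simp only [map_mul, aeval_X, Derivation.leibniz, hp, smul_eq_mul, map_add, pderiv_X, add_mul,
      Finset.sum_add_distrib]
    congr 1
    · rw [Finset.sum_eq_single k]
      · simp
      · intro b _ hb
        simp [hb.symm]
      · simp
    · rw [Finset.mul_sum]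
      exact Finset.sum_congr rfl fun i _ => by ring

open MvPolynomial in
lemma cdz_dvd {F σ : Type*} [Field F] [Infinite F] [DecidableEq σ]
    (j : σ) (x : F) (G : MvPolynomial σ F)
    (h : ∀ v : σ → F, v j = x → eval v G = 0) : (X j - C x) ∣ G := by
  have h0 : aeval (Function.update X j (C x) : σ → MvPolynomial σ F) G = 0 := by
    apply MvPolynomial.funext
    intro v
    have := h (Function.update v j x) (by simp)
    rw [map_zero, ← this, aeval_def, ← MvPolynomial.coe_eval₂Hom, ← RingHom.comp_apply]
    congr 1
    apply MvPolynomial.ringHom_ext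
    · intro r; simp
    · intro i
      by_cases hi : i = j
      · subst hi; simp
      · simp [hi]
  rw [← Ideal.mem_span_singleton, ← Ideal.Quotient.eq_zero_iff_mem]
  set I := Ideal.span {(X j - C x : MvPolynomial σ F)} with hI
  have h1 : (Ideal.Quotient.mkₐ F I) = (Ideal.Quotient.mkₐ F I).comp
      (aeval (Function.update X j (C x) : σ → MvPolynomial σ F)) := by
    apply MvPolynomial.algHom_ext
    intro i
    by_cases hi : i = j
    · subst hi
      simp only [AlgHom.comp_apply, aeval_X, Function.update_self, Ideal.Quotient.mkₐ_eq_mk]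
      rw [Ideal.Quotient.eq]
      exact Ideal.mem_span_singleton_self _
    · simp [hi]
  have h2 := congrArg (fun φ => φ G) h1
  simp only [AlgHom.comp_apply, h0, map_zero, Ideal.Quotient.mkₐ_eq_mk] at h2
  exact h2

open MvPolynomial in
lemma cdz_dvd_sq {F σ : Type*} [Field F] [Infinite F] [DecidableEq σ]
    (j : σ) (x : F) (G : MvPolynomial σ F)
    (h : ∀ v : σ → F, v j = x → eval v G = 0)
    (h' : ∀ v : σ → F, v j = x → eval v (pderiv j G) = 0) : (X j - C x) ^ 2 ∣ G := by
  obtain ⟨H, rfl⟩ := cdz_dvd j x G h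
  rw [pow_two]
  apply mul_dvd_mul_left
  apply cdz_dvd
  intro v hv
  have := h' v hv
  simpa [Derivation.leibniz, hv] using this

open MvPolynomial in
lemma cdz_relprime {F σ : Type*} [Field F] [Infinite F] [DecidableEq σ]
    (i j : σ) (hij : i ≠ j) (x : F) :
    IsRelPrime ((X i - C x : MvPolynomial σ F) ^ 2) ((X j - C x) ^ 2) := by
  have hirr : ∀ k : σ, Irreducible (X k - C x : MvPolynomial σ F) := by
    intro k
    have hd : (X k - C x : MvPolynomial σ F).totalDegree = 1 := by
      rw [sub_eq_add_neg, ← map_neg, totalDegree_add_eq_left_of_totalDegree_lt] <;> simp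
    apply irreducible_of_totalDegree_eq_one hd
    intro r hr
    have := hr (Finsupp.single k 1)
    rw [isUnit_iff_ne_zero]
    rintro rfl
    have hne : (0 : σ →₀ ℕ) ≠ Finsupp.single k 1 := by
      intro h
      have := congrArg (fun f => f k) h
      simp at this
    simp [coeff_C, hne] at this
  apply IsRelPrime.pow
  rw [(hirr i).isRelPrime_iff_not_dvd]
  rintro ⟨q, hq⟩
  have := congrArg (eval (fun k => if k = i then x else x + 1)) hq
  simp [hij.symm] at this


/-- If a symmetric polynomial `P` in `n` variables vanishes whenever `N+1` of its
arguments coincide, then after setting `N` of the arguments equal to `x`, the result is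
divisible by `∏_{j=1}^{n−N} (t_j − x)²`. -/
theorem cluster_double_zero {F : Type*} [Field F] [CharZero F] (n N : ℕ) (hn : N + 1 ≤ n)
    (P : MvPolynomial (Fin n) F)
    (hsym : ∀ σ : Equiv.Perm (Fin n), MvPolynomial.rename σ P = P)
    (hvan : ∀ (x : F) (v : Fin n → F), (∀ i : Fin n, (i : ℕ) < N + 1 → v i = x) →
        MvPolynomial.eval v P = 0)
    (x : F) :
    (∏ j : Fin (n - N), (MvPolynomial.X j - MvPolynomial.C x) ^ 2) ∣
      MvPolynomial.aeval (fun i : Fin n =>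
        if h : (i : ℕ) < N then (MvPolynomial.C x : MvPolynomial (Fin (n - N)) F)
        else MvPolynomial.X (⟨(i : ℕ) - N, by have := i.isLt; omega⟩ : Fin (n - N))) P := by
  classical
  have hvan' : ∀ (k : Fin n), N ≤ (k : ℕ) → ∀ (y : F) (v : Fin n → F),
      (∀ i : Fin n, (i : ℕ) < N ∨ i = k → v i = y) → MvPolynomial.eval v P = 0 := by
    intro k hk y v hv
    let e : Fin n := ⟨N, by omega⟩
    rw [← hsym (Equiv.swap e k), MvPolynomial.eval_rename]
    apply hvan y
    intro i hi
    apply hv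
    by_cases hie : i = e
    · right; simp [hie]
    · have h1 : (i : ℕ) < N := by
        have : (i : ℕ) ≠ N := fun h => hie (Fin.ext h)
        omega
      have h2 : i ≠ k := by rintro rfl; omega
      left
      rwa [Equiv.swap_apply_of_ne_of_ne hie h2]
  have hder : ∀ (k : Fin n), N ≤ (k : ℕ) → ∀ (v : Fin n → F),
      (∀ i : Fin n, (i : ℕ) < N ∨ i = k → v i = x) →
      MvPolynomial.eval v (MvPolynomial.pderiv k P) = 0 := by
    intro k hk v hv
    let f : Fin n → Polynomial F := fun i =>
      if (i : ℕ) < N ∨ i = k then Polynomial.X else Polynomial.C (v i)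
    have hev : ∀ (y : F) (Q : MvPolynomial (Fin n) F), Polynomial.eval y (MvPolynomial.aeval f Q) =
        MvPolynomial.eval (fun i : Fin n => if (i : ℕ) < N ∨ i = k then y else v i) Q := by
      intro y Q
      rw [← Polynomial.coe_evalRingHom, MvPolynomial.aeval_def, ← MvPolynomial.coe_eval₂Hom,
        ← RingHom.comp_apply]
      congr 1
      apply MvPolynomial.ringHom_ext
      · intro r; simp
      · intro i
        by_cases hi : (i : ℕ) < N ∨ i = k <;> simp [f, hi]
    have h0 : MvPolynomial.aeval f P = 0 := by
      apply Polynomial.funext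
      intro y
      rw [hev, Polynomial.eval_zero]
      apply hvan' k hk y
      intro i hi
      simp [hi]
    have hw : (fun i : Fin n => if (i : ℕ) < N ∨ i = k then x else v i) = v := by
      funext i
      split_ifs with hi
      · exact (hv i hi).symm
      · rfl
    have hc := cdz_chain (Polynomial.derivative' (R := F)) f P
    rw [h0, map_zero] at hc
    have hc2 := congrArg (Polynomial.eval x) hc
    rw [Polynomial.eval_finsetSum, Polynomial.eval_zero] at hc2
    have hterm : ∀ i : Fin n, Polynomial.eval x
        (MvPolynomial.aeval f (MvPolynomial.pderiv i P) * Polynomial.derivative' (f i)) =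
        if (i : ℕ) < N ∨ i = k then MvPolynomial.eval v (MvPolynomial.pderiv k P) else 0 := by
      intro i
      rw [Polynomial.eval_mul, hev, hw]
      by_cases hi : (i : ℕ) < N ∨ i = k
      · have hs : MvPolynomial.eval v (MvPolynomial.pderiv i P) =
            MvPolynomial.eval v (MvPolynomial.pderiv k P) := by
          have h1 := MvPolynomial.pderiv_rename (R := F) (Equiv.swap i k).injective i P
          rw [hsym, Equiv.swap_apply_left] at h1
          rw [h1, MvPolynomial.eval_rename]
          congr 2
          funext l
          have hik : v i = v k := by rw [hv i hi, hv k (Or.inr rfl)]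
          simp only [Function.comp_apply, Equiv.swap_apply_def]
          split_ifs with h1 h2
          · rw [h1, hik]
          · rw [h2, hik]
          · rfl
        simp [f, hi, hs]
      · simp [f, hi]
    rw [Finset.sum_congr rfl fun i _ => hterm i, ← Finset.sum_filter, Finset.sum_const,
      nsmul_eq_mul] at hc2
    rcases mul_eq_zero.mp hc2.symm with h | h
    · exfalso
      have h3 := Finset.card_eq_zero.mp (Nat.cast_eq_zero.mp h)
      have h4 : k ∈ (Finset.univ.filter fun i : Fin n => (i : ℕ) < N ∨ i = k) := by simp
      rw [h3] at h4
      simp at h4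
    · exact h
  apply Finset.prod_dvd_of_isRelPrime
  · intro i _ j _ hij
    exact cdz_relprime i j hij x
  intro j _
  set g : Fin n → MvPolynomial (Fin (n - N)) F := fun i : Fin n =>
        if h : (i : ℕ) < N then (MvPolynomial.C x : MvPolynomial (Fin (n - N)) F)
        else MvPolynomial.X (⟨(i : ℕ) - N, by have := i.isLt; omega⟩ : Fin (n - N)) with hg
  let k : Fin n := ⟨N + j, by have := j.isLt; omega⟩
  have hk : N ≤ (k : ℕ) := by simp [k]
  have hev : ∀ (v : Fin (n - N) → F) (Q : MvPolynomial (Fin n) F),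
      MvPolynomial.eval v (MvPolynomial.aeval g Q) =
        MvPolynomial.eval (fun i => MvPolynomial.eval v (g i)) Q := by
    intro v Q
    rw [MvPolynomial.aeval_def, ← MvPolynomial.coe_eval₂Hom, ← RingHom.comp_apply]
    congr 1
    apply MvPolynomial.ringHom_ext
    · intro r; simp
    · intro i; simp
  have hgv : ∀ v : Fin (n - N) → F, v j = x →
      ∀ i : Fin n, (i : ℕ) < N ∨ i = k → MvPolynomial.eval v (g i) = x := by
    rintro v hv i (hi | rfl)
    · simp [hg, hi]
    · simp [hg, k, hv]
  apply cdz_dvd_sq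
  · intro v hv
    rw [hev]
    exact hvan' k hk x _ (hgv v hv)
  · intro v hv
    rw [cdz_chain, map_sum]
    apply Finset.sum_eq_zero
    intro i _
    by_cases hi : i = k
    · rw [map_mul, hev, hi, hder k hk _ (hgv v hv), zero_mul]
    · have : MvPolynomial.pderiv j (g i) = 0 := by
        simp only [hg]
        split_ifs with h
        · simp
        · rw [MvPolynomial.pderiv_X_of_ne]
          intro h5
          apply hi
          apply Fin.ext
          have := congrArg Fin.val h5
          simp only [k] at this ⊢
          omega
      rw [this, mul_zero, map_zero]
end

section
/- Fix N ≥ 1, m ≥ 1, 0 ≤ k_j ≤ k ≤ N with k₁+k₂+k₃ = 2k, n = mN−k. Let P(x₁,x₂,x₃|t₁,…,t_n) denote the symmetrized parafermionic polynomial (symmetrization of the basic monomial p over the t-variables). Then P satisfies the inversion property: P(1/x₁,1/x₂,1/x₃ | 1/t₁,…,1/t_n) = ∏_{j=1}^{3} x_j^{−(m−1)k_j} · ∏_{q=1}^{n} t_q^{−2(m−1)} · P(x₁,x₂,x₃|t₁,…,t_n), as an identity of rational functions. -/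
open Finset

/-- The basic monomial `p(x₁,x₂,x₃|t₁,…,t_n)` of the parafermionic polynomial.
The `n` variables are divided into `N` groups by `grp`; the group of index `q`
belongs to the set `χ_{chi q + 1}` (value `3` meaning the set `χ₄`). -/
def basicMonomial (n N : ℕ) (grp : Fin n → Fin N) (chi : Fin N → Fin 4)
    (x : Fin 3 → ℝ) (t : Fin n → ℝ) : ℝ :=
  (∏ i : Fin n, ∏ j : Fin n, if i < j ∧ grp i = grp j then (t i - t j) ^ 2 else 1) *
  ∏ j : Fin n,
    (if chi (grp j) = 0 then (t j - x 1) * (t j - x 2)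
     else if chi (grp j) = 1 then (t j - x 0) * (t j - x 2)
     else if chi (grp j) = 2 then (t j - x 0) * (t j - x 1)
     else 1)

/-- The symmetrization of the basic monomial over the variables `t₁,…,t_n`. -/
def symMonomial (n N : ℕ) (grp : Fin n → Fin N) (chi : Fin N → Fin 4)
    (x : Fin 3 → ℝ) (t : Fin n → ℝ) : ℝ :=
  ∑ σ : Equiv.Perm (Fin n), basicMonomial n N grp chi x (t ∘ σ)

/-- The configuration data of the parafermionic polynomial `𝐏_m^{(N|k₁,k₂,k₃)}`:
the groups in `χ₄` (i.e. `chi q = 3`) have `m` elements, the others `m−1` elements;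
`χ₁, χ₂, χ₃` contain `k−k₁`, `k−k₂`, `k−k₃` groups and `χ₄` contains `N−k` groups. -/
def validConfig (n N m k k1 k2 k3 : ℕ) (grp : Fin n → Fin N) (chi : Fin N → Fin 4) : Prop :=
  (∀ q : Fin N,
      (chi q = 3 → (Finset.univ.filter fun i => grp i = q).card = m) ∧
      (chi q ≠ 3 → (Finset.univ.filter fun i => grp i = q).card = m - 1)) ∧
  (Finset.univ.filter fun q => chi q = 0).card = k - k1 ∧
  (Finset.univ.filter fun q => chi q = 1).card = k - k2 ∧
  (Finset.univ.filter fun q => chi q = 2).card = k - k3 ∧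
  (Finset.univ.filter fun q => chi q = 3).card = N - k

def cFac (x : Fin 3 → ℝ) : Fin 4 → ℝ := ![x 1 * x 2, x 0 * x 2, x 0 * x 1, 1]

lemma cFac_ne (x : Fin 3 → ℝ) (hx : ∀ i, x i ≠ 0) (a : Fin 4) : cFac x a ≠ 0 := by
  fin_cases a <;> simp [cFac, hx]

lemma pairProd (n N : ℕ) (grp : Fin n → Fin N) (s : Fin n → ℝ) :
    (∏ i : Fin n, ∏ j : Fin n, if i < j ∧ grp i = grp j then (s i * s j) ^ 2 else 1) =
    ∏ i : Fin n, s i ^ (2 * ((Finset.univ.filter fun j => grp j = grp i).card - 1)) := by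
  have h1 : (∏ i : Fin n, ∏ j : Fin n, if i < j ∧ grp i = grp j then (s i * s j) ^ 2 else 1) =
      (∏ i : Fin n, ∏ j : Fin n, if i < j ∧ grp i = grp j then (s i) ^ 2 else 1) *
      (∏ i : Fin n, ∏ j : Fin n, if i < j ∧ grp i = grp j then (s j) ^ 2 else 1) := by
    simp only [← Finset.prod_mul_distrib]
    refine Finset.prod_congr rfl fun i _ => Finset.prod_congr rfl fun j _ => ?_
    split_ifs
    · ring
    · ring
  rw [h1, Finset.prod_comm (f := fun i j => if i < j ∧ grp i = grp j then (s j) ^ 2 else 1)]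
  simp only [← Finset.prod_mul_distrib]
  refine Finset.prod_congr rfl fun i _ => ?_
  have h2 : ∀ j : Fin n, ((if i < j ∧ grp i = grp j then (s i) ^ 2 else 1) *
      (if j < i ∧ grp j = grp i then (s i) ^ 2 else 1)) =
      if j ∈ (Finset.univ.filter fun j => grp j = grp i).erase i then (s i) ^ 2 else 1 := by
    intro j
    simp only [Finset.mem_erase, Finset.mem_filter, Finset.mem_univ, true_and]
    rcases lt_trichotomy i j with h | h | h
    · simp [h, h.ne', h.not_gt, eq_comm]
    · simp [h]
    · simp [h, h.ne, h.not_gt]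
  simp only [h2]
  rw [Finset.prod_ite_mem, Finset.univ_inter, Finset.prod_const, Finset.card_erase_of_mem (by simp),
    pow_mul]

lemma basic_inv (N n m k k1 k2 k3 : ℕ) (hm : 1 ≤ m)
    (hk1 : k1 ≤ k) (hk2 : k2 ≤ k) (hk3 : k3 ≤ k)
    (hsum : k1 + k2 + k3 = 2 * k)
    (grp : Fin n → Fin N) (chi : Fin N → Fin 4)
    (hcfg : validConfig n N m k k1 k2 k3 grp chi)
    (x : Fin 3 → ℝ) (hx : ∀ i : Fin 3, x i ≠ 0)
    (s : Fin n → ℝ) (hs : ∀ j, s j ≠ 0) :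
    basicMonomial n N grp chi (fun i => (x i)⁻¹) (fun j => (s j)⁻¹) =
      (∏ i : Fin 3, (x i) ^ ((m - 1) * ![k1, k2, k3] i))⁻¹ *
      (∏ q : Fin n, (s q) ^ (2 * (m - 1)))⁻¹ *
      basicMonomial n N grp chi x s := by
  obtain ⟨hcard, h0, h1, h2, h3⟩ := hcfg
  have hA : (∏ i : Fin n, ∏ j : Fin n,
        if i < j ∧ grp i = grp j then ((s i)⁻¹ - (s j)⁻¹) ^ 2 else 1) =
      (∏ i : Fin n, s i ^ (2 * ((Finset.univ.filter fun j => grp j = grp i).card - 1)))⁻¹ *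
      (∏ i : Fin n, ∏ j : Fin n, if i < j ∧ grp i = grp j then (s i - s j) ^ 2 else 1) := by
    rw [← pairProd]
    simp only [← Finset.prod_inv_distrib, ← Finset.prod_mul_distrib]
    refine Finset.prod_congr rfl fun i _ => Finset.prod_congr rfl fun j _ => ?_
    have := hs i
    have := hs j
    split_ifs
    · field_simp
      ring
    · simp
  have hB : (∏ j : Fin n,
      (if chi (grp j) = 0 then ((s j)⁻¹ - (x 1)⁻¹) * ((s j)⁻¹ - (x 2)⁻¹)
       else if chi (grp j) = 1 then ((s j)⁻¹ - (x 0)⁻¹) * ((s j)⁻¹ - (x 2)⁻¹)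
       else if chi (grp j) = 2 then ((s j)⁻¹ - (x 0)⁻¹) * ((s j)⁻¹ - (x 1)⁻¹)
       else 1)) =
      (∏ j : Fin n, cFac x (chi (grp j)))⁻¹ *
      (∏ j : Fin n, if chi (grp j) = 3 then 1 else s j ^ 2)⁻¹ *
      ∏ j : Fin n,
    (if chi (grp j) = 0 then (s j - x 1) * (s j - x 2)
     else if chi (grp j) = 1 then (s j - x 0) * (s j - x 2)
     else if chi (grp j) = 2 then (s j - x 0) * (s j - x 1)
     else 1) := by
    simp only [← Finset.prod_inv_distrib, ← Finset.prod_mul_distrib]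
    refine Finset.prod_congr rfl fun j _ => ?_
    have := hs j
    have := hx 0
    have := hx 1
    have := hx 2
    generalize chi (grp j) = a
    fin_cases a
    · simp [cFac]; field_simp; ring
    · simp [cFac]; field_simp; ring
    · simp [cFac]; field_simp; ring
    · simp [cFac]
  have hT : (∏ i : Fin n, s i ^ (2 * ((Finset.univ.filter fun j => grp j = grp i).card - 1))) *
      (∏ j : Fin n, if chi (grp j) = 3 then 1 else s j ^ 2) =
      ∏ q : Fin n, (s q) ^ (2 * (m - 1)) := by
    rw [← Finset.prod_mul_distrib]
    refine Finset.prod_congr rfl fun j _ => ?_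
    by_cases h : chi (grp j) = 3
    · simp [h, (hcard (grp j)).1 h]
    · have hc := (hcard (grp j)).2 h
      have hpos : 0 < (Finset.univ.filter fun i => grp i = grp j).card :=
        Finset.card_pos.mpr ⟨j, by simp⟩
      rw [if_neg h, hc, ← pow_add]
      congr 1
      omega
  have hC : (∏ j : Fin n, cFac x (chi (grp j))) =
      ∏ i : Fin 3, (x i) ^ ((m - 1) * ![k1, k2, k3] i) := by
    have e1 : (∏ j : Fin n, cFac x (chi (grp j))) = ∏ q : Fin N, cFac x (chi q) ^ (m - 1) := by
      rw [← Finset.prod_fiberwise Finset.univ grp]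
      refine Finset.prod_congr rfl fun q _ => ?_
      rw [Finset.prod_congr rfl (g := fun _ => cFac x (chi q))
        (fun j hj => by rw [(Finset.mem_filter.mp hj).2]), Finset.prod_const]
      by_cases h : chi q = 3
      · simp [h, cFac]
      · rw [(hcard q).2 h]
    have e2 : (∏ q : Fin N, cFac x (chi q)) =
        ∏ a : Fin 4, cFac x a ^ (Finset.univ.filter fun q => chi q = a).card := by
      rw [← Finset.prod_fiberwise Finset.univ chi]
      refine Finset.prod_congr rfl fun a _ => ?_
      rw [Finset.prod_congr rfl (g := fun _ => cFac x a)
        (fun j hj => by rw [(Finset.mem_filter.mp hj).2]), Finset.prod_const]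
    rw [e1, Finset.prod_pow, e2, Fin.prod_univ_four, h0, h1, h2, h3, Fin.prod_univ_three]
    obtain ⟨a, rfl⟩ := Nat.exists_eq_add_of_le hk1
    obtain ⟨b, hb⟩ := Nat.exists_eq_add_of_le hk2
    obtain ⟨c, hc⟩ := Nat.exists_eq_add_of_le hk3
    have r1 : k1 + a - k1 = a := by omega
    have r2 : k1 + a - k2 = b := by omega
    have r3 : k1 + a - k3 = c := by omega
    have q1 : k1 = b + c := by omega
    have q2 : k2 = a + c := by omega
    have q3 : k3 = a + b := by omega
    rw [r1, r2, r3]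
    simp only [cFac, Matrix.cons_val, q1, q2, q3, one_pow, mul_one]
    rw [mul_comm (m-1) (b+c), mul_comm (m-1) (a+c), mul_comm (m-1) (a+b), pow_mul, pow_mul, pow_mul,
      ← mul_pow, ← mul_pow]
    congr 1
    ring
  unfold basicMonomial
  rw [hA, hB, ← hT, ← hC, mul_inv]
  ring

/-- Inversion property of the symmetrized parafermionic polynomial:
`P(1/x₁,1/x₂,1/x₃|1/t₁,…,1/t_n)
  = ∏_j x_j^{−(m−1)k_j} · ∏_q t_q^{−2(m−1)} · P(x₁,x₂,x₃|t₁,…,t_n)`. -/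
theorem symMonomial_inversion (N m k k1 k2 k3 : ℕ) (hN : 1 ≤ N) (hm : 1 ≤ m)
    (hk : k ≤ N) (hk1 : k1 ≤ k) (hk2 : k2 ≤ k) (hk3 : k3 ≤ k)
    (hsum : k1 + k2 + k3 = 2 * k)
    (grp : Fin (m * N - k) → Fin N) (chi : Fin N → Fin 4)
    (hcfg : validConfig (m * N - k) N m k k1 k2 k3 grp chi)
    (x : Fin 3 → ℝ) (hx : ∀ i : Fin 3, x i ≠ 0)
    (t : Fin (m * N - k) → ℝ) (ht : ∀ j, t j ≠ 0) :
    symMonomial (m * N - k) N grp chi (fun i => (x i)⁻¹) (fun j => (t j)⁻¹) =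
      (∏ i : Fin 3, (x i) ^ ((m - 1) * ![k1, k2, k3] i))⁻¹ *
      (∏ q : Fin (m * N - k), (t q) ^ (2 * (m - 1)))⁻¹ *
      symMonomial (m * N - k) N grp chi x t := by
  unfold symMonomial
  rw [Finset.mul_sum]
  refine Finset.sum_congr rfl fun σ _ => ?_
  have h := basic_inv N (m * N - k) m k k1 k2 k3 hm hk1 hk2 hk3 hsum grp chi hcfg x hx (t ∘ σ)
    (fun j => ht _)
  have e : (∏ q, ((t ∘ σ) q) ^ (2 * (m - 1))) = ∏ q, (t q) ^ (2 * (m - 1)) :=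
    Equiv.prod_comp σ (fun q => t q ^ (2 * (m - 1)))
  rw [e] at h
  exact h
end
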